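/- Let b > 0, γ = 1 + 16b/3, and let ω = (ω₀, ω₁) ∈ Ω. Then the set of minimizers M_ω = {v ∈ H¹(ℝ) : v ≠ 0, K_ω(v) = 0, S_ω(v) = μ(ω)}, where μ(ω) = inf{S_ω(w) : w ∈ H¹(ℝ), w ≠ 0, K_ω(w) = 0}, coincides with the orbit {x ↦ e^{iθ₀}·φ_ω(x − θ₁) : θ₀ ∈ ℝ, θ₁ ∈ ℝ}. -/

import Mathlib

/-!
Write `c = 4ω₀ - ω₁²`, `γ = 1 + 16b/3`, `A = √(ω₁² + γ c)`, `N = |v|²`,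
`g(s) = √(c + ω₁ s - γ s²/4)`, and let `s* = 2c/(A - ω₁)` be the positive zero of `g`, which is also
the maximum of `|φ_ω|²`.

The variational problem is solved by completing the square. For `h² = g(N)²` the density of `S_ω`
equals `½ |v' - (i(ω₁/2 - N/4) + h/2) v|² + ¼ h N'` (`SDens_eq`). If `max N = s*` is attained at
`x₀`, take `h = g(N)` to the left of `x₀` and `h = -g(N)` to the right. The last term is then an
exact derivative on each side, and `S_ω(v) = ½ ∫ |defect|² + ½ G(s*)` with `G' = g`, `G(0) = 0`
(`Sfun_eq_defect`).

A general `v ≠ 0` with `K_ω(v) = 0` is compared with `l v`, where `t = l² = s*/max N`. Since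
`L = P + M` with `M = b ∫ |v|⁶`, one has `S(v) - S(l v) = (1 - t)² (L/4 + M/12 + M t/6)`, and `L > 0`.
Hence `S_ω(v) ≥ ½ G(s*)`, and equality forces `max N = s*` (`level_le`) and a vanishing defect, that
is, the first-order equation `v' = (i(ω₁/2 - N/4) ± g(N)/2) v`.

The modulus equation `N' = ± g(N) N` becomes linear in terms of `1/N`, so it determines the explicit
profile up to a plateau `N = s*` (`profile_right`). A plateau is excluded by `K_ω(v) = 0`
(`exists_isSol`), and the remaining freedom is a constant phase (`IsSol.eq_phase_mul`). Conversely
every element of the orbit solves the first-order equation (`isSol_orbit`), so it lies on the Nehari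
manifold at the level `½ G(s*)`.
-/

open MeasureTheory

noncomputable section

/-- γ = 1 + 16b/3 -/
def gam (b : ℝ) : ℝ := 1 + 16 * b / 3

/-- The real-valued profile ˜φ_ω. -/
def phit (b ω₀ ω₁ x : ℝ) : ℝ :=
  Real.sqrt (2 * (4 * ω₀ - ω₁ ^ 2) /
    (-ω₁ + Real.sqrt (ω₁ ^ 2 + gam b * (4 * ω₀ - ω₁ ^ 2)) *
      Real.cosh (Real.sqrt (4 * ω₀ - ω₁ ^ 2) * x)))

/-- The complex-valued solitary wave profile φ_ω. -/
def phi (b ω₀ ω₁ : ℝ) (x : ℝ) : ℂ :=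
  (phit b ω₀ ω₁ x : ℂ) *
    Complex.exp (Complex.I * (ω₁ / 2) * x -
      (Complex.I / 4) * ((∫ η in Set.Iic x, (phit b ω₀ ω₁ η) ^ 2) : ℝ))

/-- Q₀(v) = (1/2)∫|v|². -/
def Q0 (v : ℝ → ℂ) : ℝ := (1 / 2) * ∫ x : ℝ, ‖v x‖ ^ 2

/-- Q₁(v) = (1/2) Re ∫ i v' conj v. -/
def Q1 (v : ℝ → ℂ) : ℝ :=
  (1 / 2) * (∫ x : ℝ, Complex.I * deriv v x * (starRingEnd ℂ) (v x)).re

/-- P(v) = Re ∫ i |v|² v' conj v. -/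
def Pfun (v : ℝ → ℂ) : ℝ :=
  (∫ x : ℝ, Complex.I * (‖v x‖ : ℂ) ^ 2 * deriv v x * (starRingEnd ℂ) (v x)).re

/-- The energy E. -/
def Efun (b : ℝ) (v : ℝ → ℂ) : ℝ :=
  (1 / 2) * (∫ x : ℝ, ‖deriv v x‖ ^ 2) - (1 / 4) * Pfun v -
    (b / 6) * ∫ x : ℝ, ‖v x‖ ^ 6

/-- L_ω(v). -/
def Lfun (ω₀ ω₁ : ℝ) (v : ℝ → ℂ) : ℝ :=
  (∫ x : ℝ, ‖deriv v x‖ ^ 2) + ω₀ * (∫ x : ℝ, ‖v x‖ ^ 2) +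
    ω₁ * (∫ x : ℝ, Complex.I * deriv v x * (starRingEnd ℂ) (v x)).re

/-- The action S_ω. -/
def Sfun (b ω₀ ω₁ : ℝ) (v : ℝ → ℂ) : ℝ :=
  (1 / 2) * Lfun ω₀ ω₁ v - (1 / 4) * Pfun v - (b / 6) * ∫ x : ℝ, ‖v x‖ ^ 6

/-- The Nehari functional K_ω. -/
def Kfun (b ω₀ ω₁ : ℝ) (v : ℝ → ℂ) : ℝ :=
  Lfun ω₀ ω₁ v - Pfun v - b * ∫ x : ℝ, ‖v x‖ ^ 6

/-- v ∈ H¹(ℝ): v differentiable with v and v' square-integrable. -/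
def H1 (v : ℝ → ℂ) : Prop :=
  Differentiable ℝ v ∧ Integrable (fun x : ℝ => ‖v x‖ ^ 2) ∧
    Integrable (fun x : ℝ => ‖deriv v x‖ ^ 2)

/-- The function g from Remark 1. -/
def gfun (b ξ : ℝ) : ℝ :=
  (2 * (gam b - 1) / ξ) * Real.arctan ((1 + Real.sqrt (1 + ξ ^ 2)) / ξ)


/-! ### Integrability and decay of H¹ functions -/

/-- The current density `Re (i v' v̄)`. -/
def curr (v : ℝ → ℂ) (x : ℝ) : ℝ :=
  (Complex.I * deriv v x * (starRingEnd ℂ) (v x)).re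

/-- The integrand of `S_ω`. -/
def SDens (b ω₀ ω₁ : ℝ) (v : ℝ → ℂ) (x : ℝ) : ℝ :=
  1 / 2 * (‖deriv v x‖ ^ 2 + ω₀ * ‖v x‖ ^ 2 + ω₁ * curr v x) -
    1 / 4 * (‖v x‖ ^ 2 * curr v x) - b / 6 * ‖v x‖ ^ 6

/-- The integrand of `K_ω`. -/
def KDens (b ω₀ ω₁ : ℝ) (v : ℝ → ℂ) (x : ℝ) : ℝ :=
  (‖deriv v x‖ ^ 2 + ω₀ * ‖v x‖ ^ 2 + ω₁ * curr v x) -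
    ‖v x‖ ^ 2 * curr v x - b * ‖v x‖ ^ 6

lemma hasDerivAt_normSq {v : ℝ → ℂ} {d : ℂ} {x : ℝ} (h : HasDerivAt v d x) :
    HasDerivAt (fun y => ‖v y‖ ^ 2) (2 * (d * (starRingEnd ℂ) (v x)).re) x := by
  have := h.norm_sq
  simpa [Complex.inner] using this

lemma integrable_deriv_mul_conj {v : ℝ → ℂ} (hv : H1 v) :
    Integrable (fun x => deriv v x * (starRingEnd ℂ) (v x)) := by
  obtain ⟨hd, h0, h1⟩ := hv
  refine (h0.add h1).mono' ?_ (Filter.Eventually.of_forall fun x => ?_)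
  · refine (measurable_deriv v).aestronglyMeasurable.mul ?_
    exact (Complex.continuous_conj.comp hd.continuous).aestronglyMeasurable
  · simp only [norm_mul, RCLike.norm_conj, Pi.add_apply]
    nlinarith [sq_nonneg (‖v x‖ - ‖deriv v x‖), sq_nonneg ‖v x‖, sq_nonneg ‖deriv v x‖]

lemma integrable_curr_complex {v : ℝ → ℂ} (hv : H1 v) :
    Integrable (fun x => Complex.I * deriv v x * (starRingEnd ℂ) (v x)) := by
  simpa [mul_assoc] using (integrable_deriv_mul_conj hv).const_mul Complex.I

lemma integrable_curr {v : ℝ → ℂ} (hv : H1 v) : Integrable (curr v) :=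
  (integrable_curr_complex hv).re

lemma integrable_re_deriv_mul_conj {v : ℝ → ℂ} (hv : H1 v) :
    Integrable (fun x => 2 * (deriv v x * (starRingEnd ℂ) (v x)).re) :=
  ((integrable_deriv_mul_conj hv).re).const_mul 2

lemma H1.hasDerivAt_normSq {v : ℝ → ℂ} (hv : H1 v) (x : ℝ) :
    HasDerivAt (fun y => ‖v y‖ ^ 2) (2 * (deriv v x * (starRingEnd ℂ) (v x)).re) x :=
  _root_.hasDerivAt_normSq (hv.1 x).hasDerivAt

lemma H1.continuous_normSq {v : ℝ → ℂ} (hv : H1 v) : Continuous (fun x => ‖v x‖ ^ 2) :=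
  hv.1.continuous.norm.pow 2

lemma H1.tendsto_atTop {v : ℝ → ℂ} (hv : H1 v) :
    Filter.Tendsto (fun x => ‖v x‖ ^ 2) Filter.atTop (nhds 0) :=
  tendsto_zero_of_hasDerivAt_of_integrableOn_Ioi (a := 0) (fun x _ => hv.hasDerivAt_normSq x)
    (integrable_re_deriv_mul_conj hv).integrableOn hv.2.1.integrableOn

lemma H1.tendsto_atBot {v : ℝ → ℂ} (hv : H1 v) :
    Filter.Tendsto (fun x => ‖v x‖ ^ 2) Filter.atBot (nhds 0) :=
  tendsto_zero_of_hasDerivAt_of_integrableOn_Iic (a := 0) (fun x _ => hv.hasDerivAt_normSq x)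
    (integrable_re_deriv_mul_conj hv).integrableOn hv.2.1.integrableOn

lemma H1.tendsto_cocompact {v : ℝ → ℂ} (hv : H1 v) :
    Filter.Tendsto (fun x => ‖v x‖ ^ 2) (Filter.cocompact ℝ) (nhds 0) := by
  rw [cocompact_eq_atBot_atTop]
  exact hv.tendsto_atBot.sup hv.tendsto_atTop

lemma H1.exists_max {v : ℝ → ℂ} (hv : H1 v) (hne : v ≠ 0) :
    ∃ x₀, 0 < ‖v x₀‖ ^ 2 ∧ ∀ x, ‖v x‖ ^ 2 ≤ ‖v x₀‖ ^ 2 := by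
  obtain ⟨y, hy⟩ := Function.ne_iff.1 hne
  have hpos : 0 < ‖v y‖ ^ 2 := pow_pos (norm_pos_iff.2 hy) 2
  obtain ⟨x₀, hx₀⟩ := hv.continuous_normSq.exists_forall_ge' y
    (hv.tendsto_cocompact.eventually (ge_mem_nhds hpos))
  exact ⟨x₀, hpos.trans_le (hx₀ y), hx₀⟩

lemma H1.exists_bound {v : ℝ → ℂ} (hv : H1 v) : ∃ C, ∀ x, ‖v x‖ ^ 2 ≤ C := by
  by_cases h : v = 0
  · exact ⟨0, by simp [h]⟩
  · obtain ⟨x₀, -, h⟩ := hv.exists_max h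
    exact ⟨_, h⟩

/-- Multiplying an integrable function by a continuous function of a continuous bounded `N`
keeps it integrable, because `N` takes values in a compact interval. -/
lemma integrable_comp_mul_of_bdd {N : ℝ → ℝ} (hN : Continuous N) {C : ℝ}
    (h0 : ∀ x, 0 ≤ N x) (hC : ∀ x, N x ≤ C) {p : ℝ → ℝ} (hp : Continuous p)
    {f : ℝ → ℝ} (hf : Integrable f) : Integrable (fun x => p (N x) * f x) := by
  obtain ⟨M, hM⟩ := (isCompact_Icc (a := (0 : ℝ)) (b := C)).exists_bound_of_continuousOn
    hp.continuousOn
  exact hf.bdd_mul (hp.comp hN).aestronglyMeasurable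
    (Filter.Eventually.of_forall fun x => hM _ ⟨h0 x, hC x⟩)

lemma H1.integrable_comp_mul {v : ℝ → ℂ} (hv : H1 v) {p : ℝ → ℝ} (hp : Continuous p)
    {f : ℝ → ℝ} (hf : Integrable f) : Integrable (fun x => p (‖v x‖ ^ 2) * f x) := by
  obtain ⟨C, hC⟩ := hv.exists_bound
  exact integrable_comp_mul_of_bdd hv.continuous_normSq (fun x => by positivity) hC hp hf

lemma H1.integrable_normSq_mul_curr {v : ℝ → ℂ} (hv : H1 v) :
    Integrable (fun x => ‖v x‖ ^ 2 * curr v x) :=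
  hv.integrable_comp_mul continuous_id (integrable_curr hv)

lemma H1.integrable_norm_six {v : ℝ → ℂ} (hv : H1 v) : Integrable (fun x => ‖v x‖ ^ 6) := by
  have := hv.integrable_comp_mul (p := fun s => s ^ 2) (by fun_prop) hv.2.1
  refine this.congr (Filter.Eventually.of_forall fun x => ?_)
  ring

lemma Pfun_eq {v : ℝ → ℂ} (hv : H1 v) : Pfun v = ∫ x, ‖v x‖ ^ 2 * curr v x := by
  have hpt : ∀ x, Complex.I * (‖v x‖ : ℂ) ^ 2 * deriv v x * (starRingEnd ℂ) (v x) =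
      ((‖v x‖ ^ 2 : ℝ) : ℂ) * (Complex.I * deriv v x * (starRingEnd ℂ) (v x)) := by
    intro x; push_cast; ring
  obtain ⟨C, hC⟩ := hv.exists_bound
  have hint : Integrable (fun x => ((‖v x‖ ^ 2 : ℝ) : ℂ) *
      (Complex.I * deriv v x * (starRingEnd ℂ) (v x))) := by
    refine (integrable_curr_complex hv).bdd_mul (c := C)
      (Complex.continuous_ofReal.comp hv.continuous_normSq).aestronglyMeasurable
      (Filter.Eventually.of_forall fun x => ?_)
    rw [Complex.norm_real, Real.norm_of_nonneg (by positivity)]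
    exact hC x
  have h := integral_re hint
  simp only [RCLike.re_eq_complex_re] at h
  rw [Pfun]
  simp_rw [hpt]
  rw [← h]
  refine integral_congr_ae (Filter.Eventually.of_forall fun x => ?_)
  simp only [Complex.re_ofReal_mul, curr]

lemma Lfun_eq {v : ℝ → ℂ} (hv : H1 v) (ω₀ ω₁ : ℝ) : Lfun ω₀ ω₁ v =
    ∫ x, (‖deriv v x‖ ^ 2 + ω₀ * ‖v x‖ ^ 2 + ω₁ * curr v x) := by
  have h := integral_re (integrable_curr_complex hv)
  simp only [RCLike.re_eq_complex_re] at h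
  have h1 : Integrable (fun x => ω₀ * ‖v x‖ ^ 2) := hv.2.1.const_mul ω₀
  have h2 : Integrable (fun x => ω₁ * curr v x) := (integrable_curr hv).const_mul ω₁
  have h01 : Integrable (fun x => ‖deriv v x‖ ^ 2 + ω₀ * ‖v x‖ ^ 2) := hv.2.2.add h1
  rw [Lfun, ← h, integral_add h01 h2, integral_add hv.2.2 h1,
    integral_const_mul, integral_const_mul]
  rfl

lemma integrable_LDens {v : ℝ → ℂ} (hv : H1 v) (ω₀ ω₁ : ℝ) :
    Integrable (fun x => ‖deriv v x‖ ^ 2 + ω₀ * ‖v x‖ ^ 2 + ω₁ * curr v x) :=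
  (hv.2.2.add (hv.2.1.const_mul ω₀)).add ((integrable_curr hv).const_mul ω₁)

lemma integrable_SDens {v : ℝ → ℂ} (hv : H1 v) (b ω₀ ω₁ : ℝ) :
    Integrable (SDens b ω₀ ω₁ v) :=
  (((integrable_LDens hv ω₀ ω₁).const_mul _).sub (hv.integrable_normSq_mul_curr.const_mul _)).sub
    (hv.integrable_norm_six.const_mul _)

lemma Sfun_eq {v : ℝ → ℂ} (hv : H1 v) (b ω₀ ω₁ : ℝ) :
    Sfun b ω₀ ω₁ v = ∫ x, SDens b ω₀ ω₁ v x := by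
  have h1 := (integrable_LDens hv ω₀ ω₁).const_mul (1 / 2)
  have h2 := hv.integrable_normSq_mul_curr.const_mul (1 / 4)
  have h3 := hv.integrable_norm_six.const_mul (b / 6)
  have h12 : Integrable (fun x => 1 / 2 * (‖deriv v x‖ ^ 2 + ω₀ * ‖v x‖ ^ 2 + ω₁ * curr v x) -
      1 / 4 * (‖v x‖ ^ 2 * curr v x)) := h1.sub h2
  rw [Sfun, Lfun_eq hv, Pfun_eq hv]
  simp only [SDens]
  rw [integral_sub h12 h3, integral_sub h1 h2]
  simp only [integral_const_mul]

lemma Kfun_eq {v : ℝ → ℂ} (hv : H1 v) (b ω₀ ω₁ : ℝ) :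
    Kfun b ω₀ ω₁ v = ∫ x, KDens b ω₀ ω₁ v x := by
  have h1 := integrable_LDens hv ω₀ ω₁
  have h2 := hv.integrable_normSq_mul_curr
  have h3 := hv.integrable_norm_six.const_mul b
  have h12 : Integrable (fun x => (‖deriv v x‖ ^ 2 + ω₀ * ‖v x‖ ^ 2 + ω₁ * curr v x) -
      ‖v x‖ ^ 2 * curr v x) := h1.sub h2
  rw [Kfun, Lfun_eq hv, Pfun_eq hv]
  simp only [KDens]
  rw [integral_sub h12 h3, integral_sub h1 h2]
  simp only [integral_const_mul]

/-! ### Pointwise identities -/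

/-- The factor `i (ω₁/2 - s/4) + h/2` in the first-order equation `v' = zfac · v`, where
`s = |v|²` and `h` is the logarithmic derivative of `|v|²`. -/
def zfac (ω₁ s h : ℝ) : ℂ := Complex.I * ((ω₁ / 2 - s / 4 : ℝ) : ℂ) + ((h / 2 : ℝ) : ℂ)

/-- Completing the square in the action density. -/
lemma SDens_eq (b ω₀ ω₁ : ℝ) (v : ℝ → ℂ) (x h : ℝ)
    (hh : h ^ 2 = (4 * ω₀ - ω₁ ^ 2) + ω₁ * ‖v x‖ ^ 2 - gam b / 4 * (‖v x‖ ^ 2) ^ 2) :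
    SDens b ω₀ ω₁ v x = 1 / 2 * ‖deriv v x - zfac ω₁ (‖v x‖ ^ 2) h * v x‖ ^ 2 +
      1 / 4 * (h * (2 * (deriv v x * (starRingEnd ℂ) (v x)).re)) := by
  have h6 : ‖v x‖ ^ 6 = (‖v x‖ ^ 2) ^ 3 := by ring
  have hN : ‖v x‖ ^ 2 = (v x).re ^ 2 + (v x).im ^ 2 := by
    rw [Complex.sq_norm, Complex.normSq_apply]; ring
  rw [SDens, curr, h6]
  generalize ‖v x‖ ^ 2 = s at *
  rw [Complex.sq_norm, Complex.sq_norm, Complex.normSq_apply, Complex.normSq_apply]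
  simp only [zfac, Complex.sub_re, Complex.sub_im, Complex.mul_re, Complex.mul_im, Complex.add_re,
    Complex.add_im, Complex.I_re, Complex.I_im, Complex.ofReal_re, Complex.ofReal_im,
    Complex.conj_re, Complex.conj_im]
  rw [gam] at hh
  generalize (v x).re = p at *
  generalize (v x).im = q at *
  linear_combination (-(1 : ℝ) / 8 * s) * hh + (h ^ 2 / 8 + (ω₁ / 2 - s / 4) ^ 2 / 2) * hN

/-- The integrand of `K_ω` along solutions of the first-order equation, as a function of `|v|²`. -/
def kpoly (c ω₁ γ s : ℝ) : ℝ := c / 2 * s + 3 / 4 * ω₁ * s ^ 2 - γ / 4 * s ^ 3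

lemma KDens_eq (b ω₀ ω₁ : ℝ) (v : ℝ → ℂ) (x h : ℝ)
    (hh : h ^ 2 = (4 * ω₀ - ω₁ ^ 2) + ω₁ * ‖v x‖ ^ 2 - gam b / 4 * (‖v x‖ ^ 2) ^ 2)
    (hd : deriv v x = zfac ω₁ (‖v x‖ ^ 2) h * v x) :
    KDens b ω₀ ω₁ v x = kpoly (4 * ω₀ - ω₁ ^ 2) ω₁ (gam b) (‖v x‖ ^ 2) := by
  have h6 : ‖v x‖ ^ 6 = (‖v x‖ ^ 2) ^ 3 := by ring
  have hN : ‖v x‖ ^ 2 = (v x).re ^ 2 + (v x).im ^ 2 := by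
    rw [Complex.sq_norm, Complex.normSq_apply]; ring
  rw [KDens, curr, h6, hd]
  generalize ‖v x‖ ^ 2 = s at *
  rw [Complex.sq_norm, Complex.normSq_apply]
  simp only [zfac, Complex.mul_re, Complex.mul_im, Complex.add_re,
    Complex.add_im, Complex.I_re, Complex.I_im, Complex.ofReal_re, Complex.ofReal_im,
    Complex.conj_re, Complex.conj_im]
  rw [gam] at *
  rw [kpoly]
  generalize (v x).re = p at *
  generalize (v x).im = q at *
  linear_combination (1 / 4 * s) * hh - (h ^ 2 / 4 + (ω₁ / 2 - s / 4) ^ 2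
    - (ω₁ - s) * (ω₁ / 2 - s / 4)) * hN

/-! ### The potential factor and the sharp lower bound -/

/-- `g(s) = √(c + ω₁ s - γ s²/4)`, so that the potential energy density is `s g(s)² / 8`
with `s = |v|²`. -/
def gfac (c ω₁ γ s : ℝ) : ℝ := Real.sqrt (c + ω₁ * s - γ / 4 * s ^ 2)

/-- The primitive of `gfac` vanishing at `0`. -/
def Gprim (c ω₁ γ s : ℝ) : ℝ := ∫ t in (0 : ℝ)..s, gfac c ω₁ γ t

/-- The relations between `c = 4ω₀ - ω₁²`, `ω₁`, `γ` and `A = √(ω₁² + γ c)` used below. -/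
structure IsPar (c ω₁ γ A : ℝ) : Prop where
  hc : 0 < c
  hγ : 0 < γ
  hA : 0 < A
  sq : A ^ 2 = ω₁ ^ 2 + γ * c

/-- The positive zero of `c + ω₁ s - γ s²/4`, i.e. the maximal value of `|φ_ω|²`. -/
def sStar (c ω₁ A : ℝ) : ℝ := 2 * c / (A - ω₁)

namespace IsPar

variable {c ω₁ γ A : ℝ}

lemma sub_pos (h : IsPar c ω₁ γ A) : 0 < A - ω₁ := by
  have := mul_pos h.hγ h.hc
  have := (abs_lt_of_sq_lt_sq (by rw [h.sq]; linarith : ω₁ ^ 2 < A ^ 2) h.hA.le)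
  linarith [(abs_lt.1 this).2]

lemma add_pos (h : IsPar c ω₁ γ A) : 0 < A + ω₁ := by
  have := mul_pos h.hγ h.hc
  have := (abs_lt_of_sq_lt_sq (by rw [h.sq]; linarith : ω₁ ^ 2 < A ^ 2) h.hA.le)
  linarith [(abs_lt.1 this).1]

lemma sStar_pos (h : IsPar c ω₁ γ A) : 0 < sStar c ω₁ A :=
  div_pos (by linarith [h.hc]) h.sub_pos

lemma factor (h : IsPar c ω₁ γ A) (s : ℝ) :
    c + ω₁ * s - γ / 4 * s ^ 2 = (2 * c - (A - ω₁) * s) * (2 * c + (A + ω₁) * s) / (4 * c) := by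
  have := h.hc.ne'
  field_simp
  linear_combination s ^ 2 * h.sq

lemma le_sStar_iff (h : IsPar c ω₁ γ A) (s : ℝ) :
    s ≤ sStar c ω₁ A ↔ 0 ≤ 2 * c - (A - ω₁) * s := by
  rw [sStar, le_div_iff₀ h.sub_pos]
  constructor <;> intro <;> linarith

lemma lt_sStar_iff (h : IsPar c ω₁ γ A) (s : ℝ) :
    s < sStar c ω₁ A ↔ 0 < 2 * c - (A - ω₁) * s := by
  rw [sStar, lt_div_iff₀ h.sub_pos]
  constructor <;> intro <;> linarith

lemma gfac_sq (h : IsPar c ω₁ γ A) {s : ℝ} (h0 : 0 ≤ s) (h1 : s ≤ sStar c ω₁ A) :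
    gfac c ω₁ γ s ^ 2 = c + ω₁ * s - γ / 4 * s ^ 2 := by
  rw [gfac, Real.sq_sqrt]
  rw [h.factor]
  have := h.hc
  have := mul_nonneg h.add_pos.le h0
  exact div_nonneg (mul_nonneg ((h.le_sStar_iff s).1 h1) (by linarith)) (by linarith)

lemma gfac_pos (h : IsPar c ω₁ γ A) {s : ℝ} (h0 : 0 ≤ s) (h1 : s < sStar c ω₁ A) :
    0 < gfac c ω₁ γ s := by
  rw [gfac, Real.sqrt_pos, h.factor]
  have := h.hc
  have := mul_nonneg h.add_pos.le h0
  exact div_pos (mul_pos ((h.lt_sStar_iff s).1 h1) (by linarith)) (by linarith)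

lemma poly_sStar (h : IsPar c ω₁ γ A) :
    c + ω₁ * sStar c ω₁ A - γ / 4 * sStar c ω₁ A ^ 2 = 0 := by
  rw [h.factor, sStar]
  have := h.sub_pos.ne'
  field_simp
  ring

lemma gfac_sStar (h : IsPar c ω₁ γ A) : gfac c ω₁ γ (sStar c ω₁ A) = 0 := by
  rw [gfac, h.poly_sStar, Real.sqrt_zero]

lemma kpoly_sStar_neg (h : IsPar c ω₁ γ A) : kpoly c ω₁ γ (sStar c ω₁ A) < 0 := by
  have h1 : kpoly c ω₁ γ (sStar c ω₁ A) =
      -(sStar c ω₁ A / 4) * (2 * c + ω₁ * sStar c ω₁ A) := by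
    rw [kpoly]
    linear_combination (sStar c ω₁ A) * h.poly_sStar
  have h2 : 2 * c + ω₁ * sStar c ω₁ A = A * sStar c ω₁ A := by
    rw [sStar]
    have := h.sub_pos.ne'
    field_simp
    ring
  rw [h1, h2]
  have := mul_pos h.sStar_pos (mul_pos h.hA h.sStar_pos)
  linarith

end IsPar

lemma continuous_gfac (c ω₁ γ : ℝ) : Continuous (gfac c ω₁ γ) := by
  unfold gfac; fun_prop

lemma hasDerivAt_Gprim (c ω₁ γ s : ℝ) : HasDerivAt (Gprim c ω₁ γ) (gfac c ω₁ γ s) s :=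
  intervalIntegral.integral_hasDerivAt_right ((continuous_gfac c ω₁ γ).intervalIntegrable _ _)
    (continuous_gfac c ω₁ γ).stronglyMeasurable.stronglyMeasurableAtFilter
    (continuous_gfac c ω₁ γ).continuousAt

/-- `+g(|v|²)` to the left of `x₀` and `-g(|v|²)` to the right. -/
def hfun (c ω₁ γ : ℝ) (N : ℝ → ℝ) (x₀ x : ℝ) : ℝ :=
  if x ≤ x₀ then gfac c ω₁ γ (N x) else -gfac c ω₁ γ (N x)

lemma hfun_sq {c ω₁ γ A : ℝ} (h : IsPar c ω₁ γ A) {N : ℝ → ℝ} {x₀ x : ℝ} (h0 : 0 ≤ N x)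
    (h1 : N x ≤ sStar c ω₁ A) :
    hfun c ω₁ γ N x₀ x ^ 2 = c + ω₁ * N x - γ / 4 * N x ^ 2 := by
  rw [hfun]
  split_ifs
  · exact h.gfac_sq h0 h1
  · rw [neg_sq]; exact h.gfac_sq h0 h1

lemma continuous_hfun {c ω₁ γ A : ℝ} (h : IsPar c ω₁ γ A) {N : ℝ → ℝ} (hN : Continuous N)
    {x₀ : ℝ} (h0 : N x₀ = sStar c ω₁ A) : Continuous (hfun c ω₁ γ N x₀) := by
  have hg := (continuous_gfac c ω₁ γ).comp hN
  refine Continuous.if_le hg hg.neg continuous_id continuous_const ?_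
  intro x hx
  have hx : x = x₀ := hx
  simp [hx, h0, h.gfac_sStar]

/-- The defect in the first-order equation. -/
def defect (c ω₁ γ : ℝ) (v : ℝ → ℂ) (x₀ x : ℝ) : ℂ :=
  deriv v x - zfac ω₁ (‖v x‖ ^ 2) (hfun c ω₁ γ (fun y => ‖v y‖ ^ 2) x₀ x) * v x

/-- The cross term left over from completing the square is an exact derivative on each side of
`x₀`, hence its integral only sees the value of `|v|²` at `x₀`. -/
lemma integral_cross {c ω₁ γ A : ℝ} {v : ℝ → ℂ} (hv : H1 v) {x₀ : ℝ}
    (h0 : ‖v x₀‖ ^ 2 = sStar c ω₁ A) :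
    Integrable (fun x => hfun c ω₁ γ (fun y => ‖v y‖ ^ 2) x₀ x *
      (2 * (deriv v x * (starRingEnd ℂ) (v x)).re)) ∧
    ∫ x, hfun c ω₁ γ (fun y => ‖v y‖ ^ 2) x₀ x *
      (2 * (deriv v x * (starRingEnd ℂ) (v x)).re) = 2 * Gprim c ω₁ γ (sStar c ω₁ A) := by
  set N : ℝ → ℝ := fun y => ‖v y‖ ^ 2 with hN
  set N' : ℝ → ℝ := fun x => 2 * (deriv v x * (starRingEnd ℂ) (v x)).re with hN'
  have hint : Integrable (fun x => gfac c ω₁ γ (N x) * N' x) :=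
    hv.integrable_comp_mul (continuous_gfac c ω₁ γ) (integrable_re_deriv_mul_conj hv)
  have hder : ∀ x, HasDerivAt (fun y => Gprim c ω₁ γ (N y)) (gfac c ω₁ γ (N x) * N' x) x :=
    fun x => (hasDerivAt_Gprim c ω₁ γ (N x)).comp x (hv.hasDerivAt_normSq x)
  have hG0 : Filter.Tendsto (Gprim c ω₁ γ) (nhds 0) (nhds 0) := by
    have := (hasDerivAt_Gprim c ω₁ γ 0).continuousAt.tendsto
    simpa [Gprim] using this
  have hL : Set.EqOn (fun x => hfun c ω₁ γ N x₀ x * N' x)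
      (fun x => gfac c ω₁ γ (N x) * N' x) (Set.Iic x₀) := by
    intro x hx
    simp only [Set.mem_Iic] at hx
    simp [hfun, hx]
  have hR : Set.EqOn (fun x => hfun c ω₁ γ N x₀ x * N' x)
      (fun x => -(gfac c ω₁ γ (N x) * N' x)) (Set.Ioi x₀) := by
    intro x hx
    simp only [Set.mem_Ioi] at hx
    simp [hfun, not_le.2 hx]
  have iL : IntegrableOn (fun x => hfun c ω₁ γ N x₀ x * N' x) (Set.Iic x₀) :=
    (integrableOn_congr_fun hL measurableSet_Iic).2 hint.integrableOn
  have iR : IntegrableOn (fun x => hfun c ω₁ γ N x₀ x * N' x) (Set.Ioi x₀) :=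
    (integrableOn_congr_fun hR measurableSet_Ioi).2 hint.neg.integrableOn
  refine ⟨?_, ?_⟩
  · rw [← integrableOn_univ, ← Set.Iic_union_Ioi (a := x₀)]
    exact iL.union iR
  · rw [← intervalIntegral.integral_Iic_add_Ioi iL iR, setIntegral_congr_fun measurableSet_Iic hL,
      setIntegral_congr_fun measurableSet_Ioi hR, integral_neg,
      integral_Iic_of_hasDerivAt_of_tendsto' (fun x _ => hder x) hint.integrableOn
        (hG0.comp hv.tendsto_atBot),
      integral_Ioi_of_hasDerivAt_of_tendsto' (fun x _ => hder x) hint.integrableOn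
        (hG0.comp hv.tendsto_atTop)]
    simp only [hN, h0]
    ring

/-- The action of a function whose squared modulus peaks exactly at the value `sStar` is the
ground-state level `G(sStar)/2` plus half the squared `L²` norm of the defect. -/
lemma Sfun_eq_defect {b ω₀ ω₁ A : ℝ} (h : IsPar (4 * ω₀ - ω₁ ^ 2) ω₁ (gam b) A) {v : ℝ → ℂ}
    (hv : H1 v) {x₀ : ℝ} (h0 : ‖v x₀‖ ^ 2 = sStar (4 * ω₀ - ω₁ ^ 2) ω₁ A)
    (hmax : ∀ x, ‖v x‖ ^ 2 ≤ sStar (4 * ω₀ - ω₁ ^ 2) ω₁ A) :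
    Integrable (fun x => ‖defect (4 * ω₀ - ω₁ ^ 2) ω₁ (gam b) v x₀ x‖ ^ 2) ∧
    Sfun b ω₀ ω₁ v = 1 / 2 * (∫ x, ‖defect (4 * ω₀ - ω₁ ^ 2) ω₁ (gam b) v x₀ x‖ ^ 2) +
      1 / 2 * Gprim (4 * ω₀ - ω₁ ^ 2) ω₁ (gam b) (sStar (4 * ω₀ - ω₁ ^ 2) ω₁ A) := by
  obtain ⟨hi, hI⟩ := integral_cross (γ := gam b) hv h0
  have hpt : ∀ x, SDens b ω₀ ω₁ v x =
      1 / 2 * ‖defect (4 * ω₀ - ω₁ ^ 2) ω₁ (gam b) v x₀ x‖ ^ 2 +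
      1 / 4 * (hfun (4 * ω₀ - ω₁ ^ 2) ω₁ (gam b) (fun y => ‖v y‖ ^ 2) x₀ x *
        (2 * (deriv v x * (starRingEnd ℂ) (v x)).re)) := fun x => SDens_eq b ω₀ ω₁ v x
    (hfun (4 * ω₀ - ω₁ ^ 2) ω₁ (gam b) (fun y => ‖v y‖ ^ 2) x₀ x)
    (hfun_sq h (by positivity) (hmax x))
  have hS := integrable_SDens hv b ω₀ ω₁
  have hD : Integrable (fun x => ‖defect (4 * ω₀ - ω₁ ^ 2) ω₁ (gam b) v x₀ x‖ ^ 2) := by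
    refine ((hS.sub (hi.const_mul (1 / 4))).const_mul 2).congr
      (Filter.Eventually.of_forall fun x => ?_)
    simp only [Pi.sub_apply, hpt x]
    ring
  refine ⟨hD, ?_⟩
  rw [Sfun_eq hv, integral_congr_ae (Filter.Eventually.of_forall hpt),
    integral_add (hD.const_mul (1 / 2)) (hi.const_mul (1 / 4)), integral_const_mul,
    integral_const_mul, hI]
  ring

/-! ### The explicit profile -/

/-- The explicit formula for `|φ_ω|²`. -/
def Phi (c ω₁ A x : ℝ) : ℝ := 2 * c / (-ω₁ + A * Real.cosh (Real.sqrt c * x))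

namespace IsPar

variable {c ω₁ γ A : ℝ}

lemma den_ge (h : IsPar c ω₁ γ A) (x : ℝ) : A - ω₁ ≤ -ω₁ + A * Real.cosh (Real.sqrt c * x) := by
  nlinarith [Real.one_le_cosh (Real.sqrt c * x), h.hA]

lemma den_pos (h : IsPar c ω₁ γ A) (x : ℝ) : 0 < -ω₁ + A * Real.cosh (Real.sqrt c * x) :=
  h.sub_pos.trans_le (h.den_ge x)

lemma Phi_pos (h : IsPar c ω₁ γ A) (x : ℝ) : 0 < Phi c ω₁ A x :=
  div_pos (by linarith [h.hc]) (h.den_pos x)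

lemma Phi_le (h : IsPar c ω₁ γ A) (x : ℝ) : Phi c ω₁ A x ≤ sStar c ω₁ A :=
  div_le_div_of_nonneg_left (by linarith [h.hc]) h.sub_pos (h.den_ge x)

lemma Phi_zero : Phi c ω₁ A 0 = sStar c ω₁ A := by
  simp only [Phi, sStar, mul_zero, Real.cosh_zero]
  congr 1
  ring

lemma Phi_neg (x : ℝ) : Phi c ω₁ A (-x) = Phi c ω₁ A x := by
  simp [Phi]

lemma hasDerivAt_den (x : ℝ) : HasDerivAt (fun y => -ω₁ + A * Real.cosh (Real.sqrt c * y))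
    (A * (Real.sinh (Real.sqrt c * x) * Real.sqrt c)) x := by
  have h1 : HasDerivAt (fun y => Real.sqrt c * y) (Real.sqrt c) x := by
    simpa using (hasDerivAt_id x).const_mul (Real.sqrt c)
  exact (h1.cosh.const_mul A).const_add _

lemma hasDerivAt_Phi (h : IsPar c ω₁ γ A) (x : ℝ) : HasDerivAt (Phi c ω₁ A)
    (-(2 * c * (A * (Real.sinh (Real.sqrt c * x) * Real.sqrt c))) /
      (-ω₁ + A * Real.cosh (Real.sqrt c * x)) ^ 2) x := by
  have := ((hasDerivAt_const x (2 * c)).div (hasDerivAt_den (ω₁ := ω₁) (A := A) (c := c) x)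
    (h.den_pos x).ne')
  refine HasDerivAt.congr_deriv (f := Phi c ω₁ A) this ?_
  ring

lemma continuous_Phi (h : IsPar c ω₁ γ A) : Continuous (Phi c ω₁ A) :=
  continuous_iff_continuousAt.2 fun x => (h.hasDerivAt_Phi x).continuousAt

/-- The second-order equation `Φ'' = 2 k(Φ)`. -/
lemma hasDerivAt_Phi' (h : IsPar c ω₁ γ A) (x : ℝ) :
    HasDerivAt (fun y => -(2 * c * (A * (Real.sinh (Real.sqrt c * y) * Real.sqrt c))) /
      (-ω₁ + A * Real.cosh (Real.sqrt c * y)) ^ 2) (2 * kpoly c ω₁ γ (Phi c ω₁ A x)) x := by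
  have h1 : HasDerivAt (fun y => Real.sqrt c * y) (Real.sqrt c) x := by
    simpa using (hasDerivAt_id x).const_mul (Real.sqrt c)
  have hd := (h.den_pos x).ne'
  have := ((((h1.sinh.mul_const (Real.sqrt c)).const_mul A).const_mul (2 * c)).neg).div
    ((hasDerivAt_den (ω₁ := ω₁) (A := A) (c := c) x).pow 2) (pow_ne_zero 2 hd)
  refine this.congr_deriv ?_
  have hs : Real.sqrt c ^ 2 = c := Real.sq_sqrt h.hc.le
  have hch := Real.cosh_sq (Real.sqrt c * x)
  have hA := h.sq
  simp only [kpoly, Phi, Pi.pow_apply, Pi.neg_apply]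
  generalize Real.cosh (Real.sqrt c * x) = C at *
  generalize Real.sinh (Real.sqrt c * x) = S at *
  generalize Real.sqrt c = r at *
  field_simp
  push_cast
  linear_combination (4 * c * A * (-ω₁ + A * C) * (-C * (-ω₁ + A * C) + 2 * A * S ^ 2)) * hs
    - (8 * c ^ 2 * (-ω₁ + A * C) * A ^ 2) * hch - (8 * c ^ 2 * (-ω₁ + A * C)) * hA

lemma hfun_Phi (h : IsPar c ω₁ γ A) (x : ℝ) : hfun c ω₁ γ (Phi c ω₁ A) 0 x =
    -(A * (Real.sinh (Real.sqrt c * x) * Real.sqrt c)) /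
      (-ω₁ + A * Real.cosh (Real.sqrt c * x)) := by
  have hd := h.den_pos x
  have hg : gfac c ω₁ γ (Phi c ω₁ A x) = |A * (Real.sinh (Real.sqrt c * x) * Real.sqrt c) /
      (-ω₁ + A * Real.cosh (Real.sqrt c * x))| := by
    rw [← Real.sqrt_sq_eq_abs, gfac]
    congr 1
    have hs : Real.sqrt c ^ 2 = c := Real.sq_sqrt h.hc.le
    have hch := Real.cosh_sq (Real.sqrt c * x)
    have hA := h.sq
    simp only [Phi]
    generalize Real.cosh (Real.sqrt c * x) = C at *
    generalize Real.sinh (Real.sqrt c * x) = S at *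
    have hd := hd.ne'
    field_simp
    rw [hs]
    linear_combination (4 * c) * hA + 4 * c * A ^ 2 * hch
  have hsc := Real.sqrt_pos.2 h.hc
  rw [hfun, hg]
  split_ifs with hx
  · have : Real.sinh (Real.sqrt c * x) ≤ 0 :=
      Real.sinh_nonpos_iff.2 (mul_nonpos_of_nonneg_of_nonpos hsc.le hx)
    rw [abs_of_nonpos, neg_div]
    refine div_nonpos_of_nonpos_of_nonneg ?_ hd.le
    exact mul_nonpos_of_nonneg_of_nonpos h.hA.le (mul_nonpos_of_nonpos_of_nonneg this hsc.le)
  · have : 0 ≤ Real.sinh (Real.sqrt c * x) :=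
      Real.sinh_nonneg_iff.2 (mul_nonneg hsc.le (not_le.1 hx).le)
    rw [abs_of_nonneg, neg_div]
    exact div_nonneg (mul_nonneg h.hA.le (mul_nonneg this hsc.le)) hd.le

/-- The first-order equation for `Φ`. -/
lemma hasDerivAt_Phi_hfun (h : IsPar c ω₁ γ A) (x : ℝ) : HasDerivAt (Phi c ω₁ A)
    (hfun c ω₁ γ (Phi c ω₁ A) 0 x * Phi c ω₁ A x) x := by
  convert h.hasDerivAt_Phi x using 1
  rw [h.hfun_Phi, Phi]
  have := (h.den_pos x).ne'
  field_simp

lemma integrable_Phi (h : IsPar c ω₁ γ A) : Integrable (Phi c ω₁ A) := by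
  have hsc := Real.sqrt_pos.2 h.hc
  have hbase : Integrable (fun x : ℝ => (1 + (Real.sqrt c * x) ^ 2)⁻¹) :=
    integrable_inv_one_add_sq.comp_mul_left' (ne_of_gt hsc)
  -- `cosh y ≥ (1 + y²)/4` and `A cosh y - ω₁ ≥ m cosh y` with `m = min (A - ω₁) A`.
  set m := min (A - ω₁) A with hm
  have hmpos : 0 < m := lt_min h.sub_pos h.hA
  refine (hbase.const_mul (8 * c / m)).mono' h.continuous_Phi.aestronglyMeasurable
    (Filter.Eventually.of_forall fun x => ?_)
  rw [Real.norm_of_nonneg (h.Phi_pos x).le, Phi]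
  have hcosh : ∀ y : ℝ, (1 + y ^ 2) / 4 ≤ Real.cosh y := by
    intro y
    rw [← Real.cosh_abs, Real.cosh_eq, ← sq_abs]
    have := Real.quadratic_le_exp_of_nonneg (abs_nonneg y)
    have := Real.exp_pos (-|y|)
    have := abs_nonneg y
    linarith
  have h1 := hcosh (Real.sqrt c * x)
  have h2 := Real.one_le_cosh (Real.sqrt c * x)
  have h3 : m * Real.cosh (Real.sqrt c * x) ≤ -ω₁ + A * Real.cosh (Real.sqrt c * x) := by
    rcases le_total 0 ω₁ with hw | hw
    · have : m ≤ A - ω₁ := min_le_left _ _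
      nlinarith
    · have : m ≤ A := min_le_right _ _
      nlinarith
  have hq : 0 < 1 + (Real.sqrt c * x) ^ 2 := by positivity
  rw [div_le_iff₀ (h.den_pos x)]
  have h4 : m * ((1 + (Real.sqrt c * x) ^ 2) / 4) ≤ -ω₁ + A * Real.cosh (Real.sqrt c * x) :=
    (mul_le_mul_of_nonneg_left h1 hmpos.le).trans h3
  have hc := h.hc
  calc 2 * c = 8 * c / m * (1 + (Real.sqrt c * x) ^ 2)⁻¹ *
        (m * ((1 + (Real.sqrt c * x) ^ 2) / 4)) := by
        field_simp; norm_num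
    _ ≤ _ := mul_le_mul_of_nonneg_left h4 (by positivity)

lemma integrable_comp_Phi (h : IsPar c ω₁ γ A) {p : ℝ → ℝ} (hp : Continuous p) :
    Integrable (fun x => p (Phi c ω₁ A x) * Phi c ω₁ A x) :=
  integrable_comp_mul_of_bdd h.continuous_Phi (fun x => (h.Phi_pos x).le) h.Phi_le hp
    h.integrable_Phi

lemma integrable_kpoly_Phi (h : IsPar c ω₁ γ A) :
    Integrable (fun x => kpoly c ω₁ γ (Phi c ω₁ A x)) := by
  refine (h.integrable_comp_Phi
    (p := fun s => c / 2 + 3 / 4 * ω₁ * s - γ / 4 * s ^ 2) (by fun_prop)).congr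
    (Filter.Eventually.of_forall fun x => ?_)
  simp only [kpoly]
  ring

/-- `K_ω` vanishes on the profile, since its integrand is the derivative of `Φ'/2`. -/
lemma integral_kpoly_Phi (h : IsPar c ω₁ γ A) : ∫ x, kpoly c ω₁ γ (Phi c ω₁ A x) = 0 := by
  have hcont : Continuous (hfun c ω₁ γ (Phi c ω₁ A) 0) :=
    continuous_hfun h h.continuous_Phi Phi_zero
  have hint : Integrable (fun y => -(2 * c * (A * (Real.sinh (Real.sqrt c * y) * Real.sqrt c))) /
      (-ω₁ + A * Real.cosh (Real.sqrt c * y)) ^ 2) := by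
    refine (h.integrable_comp_Phi (continuous_gfac c ω₁ γ)).mono'
      ?_ (Filter.Eventually.of_forall fun x => ?_)
    · exact (continuous_iff_continuousAt.2
        fun x => (h.hasDerivAt_Phi' x).continuousAt).aestronglyMeasurable
    · rw [(h.hasDerivAt_Phi x).unique (h.hasDerivAt_Phi_hfun x), norm_mul,
        Real.norm_of_nonneg (h.Phi_pos x).le]
      refine mul_le_mul_of_nonneg_right (le_of_eq ?_) (h.Phi_pos x).le
      have hg : 0 ≤ gfac c ω₁ γ (Phi c ω₁ A x) := Real.sqrt_nonneg _
      rw [hfun]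
      split_ifs
      · exact Real.norm_of_nonneg hg
      · rw [norm_neg]; exact Real.norm_of_nonneg hg
  have := integral_eq_zero_of_hasDerivAt_of_integrable h.hasDerivAt_Phi'
    (h.integrable_kpoly_Phi.const_mul 2) hint
  rw [integral_const_mul] at this
  linarith

end IsPar

lemma hfun_translate (c ω₁ γ : ℝ) (N : ℝ → ℝ) (x₀ x : ℝ) :
    hfun c ω₁ γ (fun y => N (y - x₀)) x₀ x = hfun c ω₁ γ N 0 (x - x₀) := by
  simp [hfun]

/-! ### Translates of the profile solve the first-order system -/

/-- `v` solves the first-order equation with turning point `x₀` and has the explicit modulus. -/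
structure IsSol (c ω₁ γ A : ℝ) (v : ℝ → ℂ) (x₀ : ℝ) : Prop where
  normSq : ∀ x, ‖v x‖ ^ 2 = Phi c ω₁ A (x - x₀)
  hasDerivAt : ∀ x, HasDerivAt v
    (zfac ω₁ (‖v x‖ ^ 2) (hfun c ω₁ γ (fun y => ‖v y‖ ^ 2) x₀ x) * v x) x

lemma norm_zfac_sq (ω₁ s h : ℝ) : ‖zfac ω₁ s h‖ ^ 2 = (ω₁ / 2 - s / 4) ^ 2 + h ^ 2 / 4 := by
  rw [Complex.sq_norm, Complex.normSq_apply]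
  simp [zfac]
  ring

namespace IsSol

variable {c ω₁ γ A : ℝ} {v : ℝ → ℂ} {x₀ : ℝ}

lemma le_sStar (hs : IsSol c ω₁ γ A v x₀) (h : IsPar c ω₁ γ A) (x : ℝ) :
    ‖v x‖ ^ 2 ≤ sStar c ω₁ A := by
  rw [hs.normSq]; exact h.Phi_le _

lemma h1 (hs : IsSol c ω₁ γ A v x₀) (h : IsPar c ω₁ γ A) : H1 v := by
  refine ⟨fun x => (hs.hasDerivAt x).differentiableAt, ?_, ?_⟩
  · simp_rw [hs.normSq]
    exact h.integrable_Phi.comp_sub_right x₀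
  · have hp : Continuous fun s : ℝ =>
        (ω₁ / 2 - s / 4) ^ 2 + (c + ω₁ * s - γ / 4 * s ^ 2) / 4 := by fun_prop
    refine ((h.integrable_comp_Phi hp).comp_sub_right x₀).congr
      (Filter.Eventually.of_forall fun x => ?_)
    simp only
    rw [(hs.hasDerivAt x).deriv, norm_mul, mul_pow, norm_zfac_sq,
      hfun_sq h (N := fun y => ‖v y‖ ^ 2) (by positivity) (hs.le_sStar h x), hs.normSq]

lemma ne_zero (hs : IsSol c ω₁ γ A v x₀) (h : IsPar c ω₁ γ A) : v ≠ 0 := by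
  rintro rfl
  have := hs.normSq 0
  have h2 := h.Phi_pos (0 - x₀)
  simp only [Pi.zero_apply, norm_zero] at this
  rw [← this] at h2
  norm_num at h2

lemma Kfun_eq_zero {b ω₀ : ℝ} (hs : IsSol (4 * ω₀ - ω₁ ^ 2) ω₁ (gam b) A v x₀)
    (h : IsPar (4 * ω₀ - ω₁ ^ 2) ω₁ (gam b) A) : Kfun b ω₀ ω₁ v = 0 := by
  rw [Kfun_eq (hs.h1 h)]
  have hpt : ∀ x, KDens b ω₀ ω₁ v x =
      kpoly (4 * ω₀ - ω₁ ^ 2) ω₁ (gam b) (Phi (4 * ω₀ - ω₁ ^ 2) ω₁ A (x - x₀)) := by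
    intro x
    rw [KDens_eq b ω₀ ω₁ v x _ (hfun_sq h (N := fun y => ‖v y‖ ^ 2) (x₀ := x₀) (by positivity)
      (hs.le_sStar h x)) (hs.hasDerivAt x).deriv, hs.normSq]
  simp_rw [hpt]
  rw [integral_sub_right_eq_self
    (fun x => kpoly (4 * ω₀ - ω₁ ^ 2) ω₁ (gam b) (Phi (4 * ω₀ - ω₁ ^ 2) ω₁ A x)) x₀]
  exact h.integral_kpoly_Phi

lemma Sfun_eq_level {b ω₀ : ℝ} (hs : IsSol (4 * ω₀ - ω₁ ^ 2) ω₁ (gam b) A v x₀)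
    (h : IsPar (4 * ω₀ - ω₁ ^ 2) ω₁ (gam b) A) : Sfun b ω₀ ω₁ v =
      1 / 2 * Gprim (4 * ω₀ - ω₁ ^ 2) ω₁ (gam b) (sStar (4 * ω₀ - ω₁ ^ 2) ω₁ A) := by
  have h0 : ‖v x₀‖ ^ 2 = sStar (4 * ω₀ - ω₁ ^ 2) ω₁ A := by
    rw [hs.normSq, sub_self, IsPar.Phi_zero]
  rw [(Sfun_eq_defect h (hs.h1 h) h0 (hs.le_sStar h)).2]
  have : ∀ x, defect (4 * ω₀ - ω₁ ^ 2) ω₁ (gam b) v x₀ x = 0 := by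
    intro x
    rw [defect, (hs.hasDerivAt x).deriv, sub_self]
  simp [this]

end IsSol

lemma isPar {b ω₀ ω₁ : ℝ} (hb : 0 < b) (hΩ : ω₁ ^ 2 < 4 * ω₀) :
    IsPar (4 * ω₀ - ω₁ ^ 2) ω₁ (gam b)
      (Real.sqrt (ω₁ ^ 2 + gam b * (4 * ω₀ - ω₁ ^ 2))) := by
  have hc : 0 < 4 * ω₀ - ω₁ ^ 2 := by linarith
  have hg : 0 < gam b := by rw [gam]; positivity
  have := mul_pos hg hc
  exact ⟨hc, hg, Real.sqrt_pos.2 (by positivity), Real.sq_sqrt (by positivity)⟩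

lemma phit_eq (b ω₀ ω₁ x : ℝ) : phit b ω₀ ω₁ x = Real.sqrt (Phi (4 * ω₀ - ω₁ ^ 2) ω₁
    (Real.sqrt (ω₁ ^ 2 + gam b * (4 * ω₀ - ω₁ ^ 2))) x) := rfl

lemma phit_sq {b ω₀ ω₁ : ℝ} (hb : 0 < b) (hΩ : ω₁ ^ 2 < 4 * ω₀) (x : ℝ) :
    phit b ω₀ ω₁ x ^ 2 = Phi (4 * ω₀ - ω₁ ^ 2) ω₁
      (Real.sqrt (ω₁ ^ 2 + gam b * (4 * ω₀ - ω₁ ^ 2))) x := by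
  rw [phit_eq, Real.sq_sqrt ((isPar hb hΩ).Phi_pos x).le]

lemma norm_phi (b ω₀ ω₁ x : ℝ) : ‖phi b ω₀ ω₁ x‖ = phit b ω₀ ω₁ x := by
  have harg : ∀ t s : ℝ, Complex.I * (ω₁ / 2) * (t : ℂ) - (Complex.I / 4) * (s : ℂ) =
      ((ω₁ / 2 * t - s / 4 : ℝ) : ℂ) * Complex.I := by
    intro t s; push_cast; ring
  rw [phi, harg, norm_mul, Complex.norm_exp_ofReal_mul_I, mul_one, Complex.norm_real, phit_eq,
    Real.norm_of_nonneg (Real.sqrt_nonneg _)]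

lemma hasDerivAt_phi {b ω₀ ω₁ : ℝ} (hb : 0 < b) (hΩ : ω₁ ^ 2 < 4 * ω₀) (x : ℝ) :
    HasDerivAt (phi b ω₀ ω₁) (zfac ω₁ (phit b ω₀ ω₁ x ^ 2)
      (hfun (4 * ω₀ - ω₁ ^ 2) ω₁ (gam b) (fun y => phit b ω₀ ω₁ y ^ 2) 0 x) *
        phi b ω₀ ω₁ x) x := by
  have h := isPar hb hΩ
  have hsq : (fun y => phit b ω₀ ω₁ y ^ 2) = Phi (4 * ω₀ - ω₁ ^ 2) ω₁
      (Real.sqrt (ω₁ ^ 2 + gam b * (4 * ω₀ - ω₁ ^ 2))) := funext (phit_sq hb hΩ)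
  have hint : Integrable (fun y => phit b ω₀ ω₁ y ^ 2) := by rw [hsq]; exact h.integrable_Phi
  have hcont : Continuous (fun y => phit b ω₀ ω₁ y ^ 2) := by rw [hsq]; exact h.continuous_Phi
  have hprim : HasDerivAt (fun y => ∫ η in Set.Iic y, phit b ω₀ ω₁ η ^ 2)
      (phit b ω₀ ω₁ x ^ 2) x := by
    have h1 : (fun y => ∫ η in Set.Iic y, phit b ω₀ ω₁ η ^ 2) = fun y =>
        (∫ η in Set.Iic (0 : ℝ), phit b ω₀ ω₁ η ^ 2) + ∫ η in (0 : ℝ)..y, phit b ω₀ ω₁ η ^ 2 := by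
      funext y
      rw [← intervalIntegral.integral_Iic_sub_Iic hint.integrableOn hint.integrableOn]
      ring
    rw [h1]
    exact (intervalIntegral.integral_hasDerivAt_right (hcont.intervalIntegrable _ _)
      hcont.stronglyMeasurable.stronglyMeasurableAtFilter hcont.continuousAt).const_add _
  have hphit : HasDerivAt (phit b ω₀ ω₁) (hfun (4 * ω₀ - ω₁ ^ 2) ω₁ (gam b)
      (fun y => phit b ω₀ ω₁ y ^ 2) 0 x / 2 * phit b ω₀ ω₁ x) x := by
    have hpos := h.Phi_pos x
    have h2 := (h.hasDerivAt_Phi_hfun x).sqrt hpos.ne'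
    rw [hsq, phit_eq]
    refine HasDerivAt.congr_deriv (f := phit b ω₀ ω₁) h2 ?_
    symm
    have h3 := Real.sqrt_pos.2 hpos
    have h4 := Real.sq_sqrt hpos.le
    rw [eq_div_iff (by positivity)]
    linear_combination (hfun (4 * ω₀ - ω₁ ^ 2) ω₁ (gam b) (Phi (4 * ω₀ - ω₁ ^ 2) ω₁
      (Real.sqrt (ω₁ ^ 2 + gam b * (4 * ω₀ - ω₁ ^ 2)))) 0 x) * h4
  have hid : HasDerivAt (fun y : ℝ => (y : ℂ)) 1 x := by
    simpa using (hasDerivAt_id x).ofReal_comp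
  have hexp := ((hid.const_mul (Complex.I * (ω₁ / 2))).sub
    (hprim.ofReal_comp.const_mul (Complex.I / 4))).cexp
  have := hphit.ofReal_comp.mul hexp
  refine HasDerivAt.congr_deriv (f := phi b ω₀ ω₁) this ?_
  simp only [zfac, phi, Pi.sub_apply]
  push_cast
  ring

/-- Every element of the orbit solves the first-order system. -/
lemma isSol_orbit {b ω₀ ω₁ : ℝ} (hb : 0 < b) (hΩ : ω₁ ^ 2 < 4 * ω₀) (θ₀ θ₁ : ℝ) :
    IsSol (4 * ω₀ - ω₁ ^ 2) ω₁ (gam b) (Real.sqrt (ω₁ ^ 2 + gam b * (4 * ω₀ - ω₁ ^ 2)))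
      (fun x => Complex.exp (Complex.I * θ₀) * phi b ω₀ ω₁ (x - θ₁)) θ₁ := by
  have hn : ∀ x : ℝ, ‖Complex.exp (Complex.I * θ₀) * phi b ω₀ ω₁ (x - θ₁)‖ =
      phit b ω₀ ω₁ (x - θ₁) := by
    intro x
    rw [norm_mul, norm_phi, mul_comm Complex.I, Complex.norm_exp_ofReal_mul_I, one_mul]
  refine ⟨fun x => by rw [hn, phit_sq hb hΩ], fun x => ?_⟩
  have h1 := ((hasDerivAt_phi hb hΩ (x - θ₁)).comp_sub_const x θ₁).const_mul
    (Complex.exp (Complex.I * θ₀))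
  refine h1.congr_deriv ?_
  simp only [hn]
  rw [hfun_translate (N := fun y => phit b ω₀ ω₁ y ^ 2)]
  ring

/-! ### Rigidity of the first-order system -/

lemma eq_of_hasDerivAt_zero {f : ℝ → ℝ} {a b : ℝ} (hab : a ≤ b) (hc : ContinuousOn f (Set.Icc a b))
    (hd : ∀ x ∈ Set.Ioo a b, HasDerivAt f 0 x) : f b = f a := by
  rcases hab.eq_or_lt with rfl | hlt
  · rfl
  · obtain ⟨_, _, h⟩ := exists_hasDerivAt_eq_slope f (fun _ => 0) hlt hc hd
    have : b - a ≠ 0 := (_root_.sub_pos.2 hlt).ne'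
    field_simp at h
    linarith

/-- A solution of `N' = -g(N) N` leaving the equilibrium value `sStar` at time `x₁` is the explicit
profile. With `z = (2c/N + ω₁)/A` and `y = √(z² - 1)` the equation becomes the linear system
`z' = √c y`, `y' = √c z`, so `(z ± y) exp(∓√c x)` are constant. -/
lemma profile_right {c ω₁ γ A : ℝ} (h : IsPar c ω₁ γ A) {N : ℝ → ℝ} (hN : Continuous N) {x₁ : ℝ}
    (h1 : N x₁ = sStar c ω₁ A) (hpos : ∀ x, x₁ < x → 0 < N x)
    (hlt : ∀ x, x₁ < x → N x < sStar c ω₁ A)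
    (hd : ∀ x, x₁ < x → HasDerivAt N (-gfac c ω₁ γ (N x) * N x) x) :
    ∀ x, x₁ ≤ x → N x = Phi c ω₁ A (x - x₁) := by
  intro x hx
  have hc := h.hc
  have hA := h.hA.ne'
  set r := Real.sqrt c with hr
  have hr2 : r ^ 2 = c := Real.sq_sqrt hc.le
  have hNpos : ∀ t, x₁ ≤ t → 0 < N t := by
    intro t ht
    rcases ht.eq_or_lt with rfl | ht
    · rw [h1]; exact h.sStar_pos
    · exact hpos t ht
  set z : ℝ → ℝ := fun t => (2 * c / N t + ω₁) / A with hz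
  set y : ℝ → ℝ := fun t => 2 * r / A * (gfac c ω₁ γ (N t) / N t) with hy
  have hzd : ∀ t, x₁ < t → HasDerivAt z (r * y t) t := by
    intro t ht
    have hne := (hpos t ht).ne'
    refine ((((hasDerivAt_const t (2 * c)).fun_div (hd t ht) hne).add_const ω₁).div_const
      A).congr_deriv ?_
    simp only [hy]
    rw [← hr2]
    field_simp
    ring
  have hyd : ∀ t, x₁ < t → HasDerivAt y (r * z t) t := by
    intro t ht
    have hne := (hpos t ht).ne'
    have hg := h.gfac_pos (hpos t ht).le (hlt t ht)
    have hgsq := h.gfac_sq (hpos t ht).le (hlt t ht).le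
    have hpne : c + ω₁ * N t - γ / 4 * N t ^ 2 ≠ 0 := by
      rw [← hgsq]; positivity
    have hgd : HasDerivAt (fun s => gfac c ω₁ γ (N s)) (-(ω₁ - γ / 2 * N t) * N t / 2) t := by
      have h2 := ((((hd t ht).const_mul ω₁).const_add c).fun_sub
        (((hd t ht).fun_pow 2).const_mul (γ / 4))).sqrt hpne
      refine HasDerivAt.congr_deriv (f := fun s => gfac c ω₁ γ (N s)) h2 ?_
      change _ / (2 * gfac c ω₁ γ (N t)) = _
      have := hg.ne'
      field_simp
      push_cast
      ring
    refine ((hgd.fun_div (hd t ht) hne).const_mul (2 * r / A)).congr_deriv ?_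
    simp only [hz]
    field_simp
    linear_combination (4 * r) * hgsq
  have hcz : ContinuousOn z (Set.Icc x₁ x) := by
    refine ContinuousOn.div_const (ContinuousOn.add (ContinuousOn.div continuousOn_const
      hN.continuousOn fun t ht => (hNpos t ht.1).ne') continuousOn_const) A
  have hcy : ContinuousOn y (Set.Icc x₁ x) :=
    ContinuousOn.mul continuousOn_const (ContinuousOn.div
      ((continuous_gfac c ω₁ γ).comp hN).continuousOn hN.continuousOn
      fun t ht => (hNpos t ht.1).ne')
  have hz1 : z x₁ = 1 := by
    simp only [hz, h1, sStar]
    have := h.sub_pos.ne'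
    field_simp
    ring
  have hy1 : y x₁ = 0 := by simp [hy, h1, h.gfac_sStar]
  have hlin : ∀ t, HasDerivAt (fun s => r * (s - x₁)) r t := fun t => by
    simpa using ((hasDerivAt_id t).sub_const x₁).const_mul r
  have e1 := eq_of_hasDerivAt_zero (f := fun t => (z t + y t) * Real.exp (-(r * (t - x₁)))) hx
    ((hcz.add hcy).mul (by fun_prop)) (fun t ht => by
      refine (((hzd t ht.1).fun_add (hyd t ht.1)).fun_mul (hlin t).fun_neg.exp).congr_deriv ?_
      ring)
  have e2 := eq_of_hasDerivAt_zero (f := fun t => (z t - y t) * Real.exp (r * (t - x₁))) hx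
    ((hcz.sub hcy).mul (by fun_prop)) (fun t ht => by
      refine (((hzd t ht.1).fun_sub (hyd t ht.1)).fun_mul (hlin t).exp).congr_deriv ?_
      ring)
  simp only [sub_self, mul_zero, neg_zero, Real.exp_zero, hz1, hy1, add_zero, sub_zero,
    mul_one] at e1 e2
  have hcosh : z x = Real.cosh (r * (x - x₁)) := by
    rw [Real.cosh_eq]
    have hE := Real.exp_pos (r * (x - x₁))
    rw [Real.exp_neg] at e1 ⊢
    field_simp at e1 ⊢
    linear_combination Real.exp (r * (x - x₁)) * e1 + e2
  have hNx := (hNpos x hx).ne'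
  have hden := h.den_pos (x - x₁)
  rw [Phi, eq_div_iff hden.ne', ← hr, ← hcosh]
  simp only [hz]
  field_simp
  ring

/-- The first-order equation everywhere, with turning point `x₀`. -/
def FirstOrder (c ω₁ γ : ℝ) (v : ℝ → ℂ) (x₀ : ℝ) : Prop :=
  ∀ x, HasDerivAt v (zfac ω₁ (‖v x‖ ^ 2) (hfun c ω₁ γ (fun y => ‖v y‖ ^ 2) x₀ x) * v x) x

/-- If the defect vanishes almost everywhere then the equation holds everywhere, because its
right-hand side is continuous. -/
lemma firstOrder_of_defect {c ω₁ γ A : ℝ} (h : IsPar c ω₁ γ A) {v : ℝ → ℂ} (hv : H1 v) {x₀ : ℝ}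
    (h0 : ‖v x₀‖ ^ 2 = sStar c ω₁ A) (hae : ∀ᵐ x, defect c ω₁ γ v x₀ x = 0) :
    FirstOrder c ω₁ γ v x₀ := by
  set R : ℝ → ℂ := fun x =>
    zfac ω₁ (‖v x‖ ^ 2) (hfun c ω₁ γ (fun y => ‖v y‖ ^ 2) x₀ x) * v x with hR
  have hRc : Continuous R := by
    have h1 := continuous_hfun h hv.continuous_normSq h0
    have h2 := hv.continuous_normSq
    have h3 := hv.1.continuous
    simp only [hR, zfac]
    fun_prop
  have hae' : ∀ᵐ x, R x = deriv v x := by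
    filter_upwards [hae] with x hx
    exact (sub_eq_zero.1 hx).symm
  have hFTC : v = fun x => v 0 + ∫ t in (0 : ℝ)..x, R t := by
    funext x
    have hi : IntervalIntegrable (deriv v) volume 0 x :=
      (hRc.intervalIntegrable 0 x).congr_ae (ae_restrict_of_ae hae')
    have h1 := intervalIntegral.integral_eq_sub_of_hasDerivAt
      (fun t _ => (hv.1 t).hasDerivAt) hi
    have h2 : ∫ t in (0 : ℝ)..x, R t = ∫ t in (0 : ℝ)..x, deriv v t :=
      intervalIntegral.integral_congr_ae (hae'.mono fun t ht _ => ht)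
    rw [h2, h1]
    ring
  intro x
  have h3 : HasDerivAt (fun x => v 0 + ∫ t in (0 : ℝ)..x, R t) (R x) x :=
    (intervalIntegral.integral_hasDerivAt_right (hRc.intervalIntegrable _ _)
      hRc.stronglyMeasurable.stronglyMeasurableAtFilter hRc.continuousAt).const_add _
  rw [← hFTC] at h3
  exact h3

lemma FirstOrder.hasDerivAt_normSq {c ω₁ γ : ℝ} {v : ℝ → ℂ} {x₀ : ℝ}
    (hf : FirstOrder c ω₁ γ v x₀) (x : ℝ) : HasDerivAt (fun y => ‖v y‖ ^ 2)
      (hfun c ω₁ γ (fun y => ‖v y‖ ^ 2) x₀ x * ‖v x‖ ^ 2) x := by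
  refine (_root_.hasDerivAt_normSq (hf x)).congr_deriv ?_
  rw [mul_assoc, Complex.mul_conj, Complex.normSq_eq_norm_sq, mul_comm, Complex.re_mul_ofReal]
  simp only [zfac, Complex.add_re, Complex.mul_re, Complex.I_re, Complex.I_im, Complex.ofReal_re,
    Complex.ofReal_im]
  ring

lemma FirstOrder.normSq_pos {c ω₁ γ A : ℝ} (h : IsPar c ω₁ γ A) {v : ℝ → ℂ} {x₀ : ℝ}
    (hf : FirstOrder c ω₁ γ v x₀) (h0 : ‖v x₀‖ ^ 2 = sStar c ω₁ A) (x : ℝ) : 0 < ‖v x‖ ^ 2 := by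
  have hNc : Continuous (fun y => ‖v y‖ ^ 2) :=
    continuous_iff_continuousAt.2 fun x => (hf.hasDerivAt_normSq x).continuousAt
  have hc := continuous_hfun h hNc h0
  set H : ℝ → ℝ := hfun c ω₁ γ (fun y => ‖v y‖ ^ 2) x₀ with hH
  have hprim : ∀ t, HasDerivAt (fun s => ∫ u in (0 : ℝ)..s, H u) (H t) t := fun t =>
    intervalIntegral.integral_hasDerivAt_right (hc.intervalIntegrable _ _)
      hc.stronglyMeasurable.stronglyMeasurableAtFilter hc.continuousAt
  have hder : ∀ t, HasDerivAt (fun s => ‖v s‖ ^ 2 * Real.exp (-∫ u in (0 : ℝ)..s, H u)) 0 t := by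
    intro t
    refine ((hf.hasDerivAt_normSq t).fun_mul (hprim t).fun_neg.exp).congr_deriv ?_
    simp only [← hH]
    ring
  have hconst := is_const_of_deriv_eq_zero (fun t => (hder t).differentiableAt)
    (fun t => (hder t).deriv) x x₀
  have hpos : 0 < ‖v x₀‖ ^ 2 * Real.exp (-∫ u in (0 : ℝ)..x₀, H u) := by
    rw [h0]; exact mul_pos h.sStar_pos (Real.exp_pos _)
  rw [← hconst] at hpos
  exact pos_of_mul_pos_left hpos (Real.exp_pos _).le

lemma FirstOrder.antitoneOn {c ω₁ γ : ℝ} {v : ℝ → ℂ} {x₀ : ℝ}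
    (hf : FirstOrder c ω₁ γ v x₀) : AntitoneOn (fun y => ‖v y‖ ^ 2) (Set.Ici x₀) := by
  refine antitoneOn_of_deriv_nonpos (convex_Ici x₀)
    (fun x _ => (hf.hasDerivAt_normSq x).continuousAt.continuousWithinAt)
    (fun x _ => (hf.hasDerivAt_normSq x).differentiableAt.differentiableWithinAt) ?_
  intro x hx
  rw [interior_Ici, Set.mem_Ioi] at hx
  rw [(hf.hasDerivAt_normSq x).deriv, hfun, if_neg (not_le.2 hx)]
  have : 0 ≤ gfac c ω₁ γ (‖v x‖ ^ 2) := Real.sqrt_nonneg _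
  have := mul_nonneg this (sq_nonneg ‖v x‖)
  linarith

lemma setIntegral_Ioi_translate (f : ℝ → ℝ) (a : ℝ) :
    ∫ x in Set.Ioi a, f (x - a) = ∫ x in Set.Ioi 0, f x := by
  have := (measurePreserving_sub_right volume a).setIntegral_preimage_emb
    (measurableEmbedding_subRight a) f (Set.Ioi 0)
  simpa using this

lemma setIntegral_Iic_translate (f : ℝ → ℝ) (a : ℝ) :
    ∫ x in Set.Iic a, f (x - a) = ∫ x in Set.Iic 0, f x := by
  have := (measurePreserving_sub_right volume a).setIntegral_preimage_emb
    (measurableEmbedding_subRight a) f (Set.Iic 0)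
  simpa using this

lemma integrable_KDens {v : ℝ → ℂ} (hv : H1 v) (b ω₀ ω₁ : ℝ) :
    Integrable (KDens b ω₀ ω₁ v) :=
  ((integrable_LDens hv ω₀ ω₁).sub hv.integrable_normSq_mul_curr).sub
    (hv.integrable_norm_six.const_mul _)

/-- A function solving the first-order equation with every maximum point of `|v|²` as turning
point is a solution with the explicit profile once `K_ω(v) = 0`: the equation alone would permit a
plateau `|v|² = sStar` of arbitrary length, but a plateau of length `ℓ` contributes
`ℓ · k(sStar) < 0` to `K_ω`. -/
lemma exists_isSol {b ω₀ ω₁ A : ℝ} (h : IsPar (4 * ω₀ - ω₁ ^ 2) ω₁ (gam b) A) {v : ℝ → ℂ}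
    (hv : H1 v) (hK : Kfun b ω₀ ω₁ v = 0)
    (hne : ∃ x₀, ‖v x₀‖ ^ 2 = sStar (4 * ω₀ - ω₁ ^ 2) ω₁ A)
    (hmax : ∀ x, ‖v x‖ ^ 2 ≤ sStar (4 * ω₀ - ω₁ ^ 2) ω₁ A)
    (hf : ∀ x₀, ‖v x₀‖ ^ 2 = sStar (4 * ω₀ - ω₁ ^ 2) ω₁ A →
      FirstOrder (4 * ω₀ - ω₁ ^ 2) ω₁ (gam b) v x₀) :
    ∃ x₀, IsSol (4 * ω₀ - ω₁ ^ 2) ω₁ (gam b) A v x₀ := by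
  set c := 4 * ω₀ - ω₁ ^ 2 with hcdef
  set γ := gam b with hγdef
  set s := sStar c ω₁ A with hs
  set N : ℝ → ℝ := fun x => ‖v x‖ ^ 2 with hN
  have hNc : Continuous N := hv.continuous_normSq
  have hMc : IsCompact {x | N x = s} := by
    obtain ⟨t, ht, hts⟩ := Filter.mem_cocompact.1
      (hv.tendsto_cocompact.eventually (gt_mem_nhds h.sStar_pos))
    refine ht.of_isClosed_subset (isClosed_eq hNc continuous_const) ?_
    intro x hx
    by_contra hxt
    have h2 : N x < s := hts hxt
    exact h2.ne hx
  obtain ⟨x₀, hx₀, hx₀'⟩ := hMc.exists_isLeast hne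
  obtain ⟨x₁, hx₁, hx₁'⟩ := hMc.exists_isGreatest hne
  have h01 : x₀ ≤ x₁ := hx₀' hx₁
  have hx₀ : N x₀ = s := hx₀
  have hx₁ : N x₁ = s := hx₁
  have hNpos : ∀ x, 0 < N x := (hf x₀ hx₀).normSq_pos h hx₀
  have hright : ∀ x, x₁ ≤ x → N x = Phi c ω₁ A (x - x₁) := by
    refine profile_right h hNc hx₁ (fun x _ => hNpos x) (fun x hx => ?_) (fun x hx => ?_)
    · refine lt_of_le_of_ne (hmax x) fun he => ?_
      exact absurd (hx₁' (show x ∈ {x | N x = s} from he)) (not_le.2 hx)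
    · refine ((hf x₁ hx₁).hasDerivAt_normSq x).congr_deriv ?_
      rw [hfun, if_neg (not_le.2 hx)]
  have hleft : ∀ x, x ≤ x₀ → N x = Phi c ω₁ A (x - x₀) := by
    have := profile_right h (N := fun x => N (-x)) (x₁ := -x₀) (hNc.comp continuous_neg)
      (by simpa using hx₀) (fun x _ => hNpos _) (fun x hx => ?_) (fun x hx => ?_)
    · intro x hx
      have h2 := this (-x) (by linarith)
      simp only [neg_neg] at h2
      rw [h2, ← IsPar.Phi_neg]
      congr 1
      ring
    · refine lt_of_le_of_ne (hmax (-x)) fun he => ?_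
      have := hx₀' (show -x ∈ {x | N x = s} from he)
      linarith
    · have h2 := ((hf x₀ hx₀).hasDerivAt_normSq (-x)).scomp x (hasDerivAt_neg x)
      refine HasDerivAt.congr_deriv (f := fun x => N (-x)) h2 ?_
      rw [hfun, if_pos (by linarith)]
      simp [hN]
  have hmid : ∀ x, x₀ ≤ x → x ≤ x₁ → N x = s := by
    intro x h0 h1
    refine le_antisymm (hmax x) ?_
    have := (hf x₀ hx₀).antitoneOn (Set.mem_Ici.2 h0) (Set.mem_Ici.2 (h0.trans h1)) h1
    simp only at this
    rw [← hx₁]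
    exact this
  have hKpt : ∀ x, KDens b ω₀ ω₁ v x = kpoly c ω₁ γ (N x) := fun x =>
    KDens_eq b ω₀ ω₁ v x _ (hfun_sq h (N := N) (x₀ := x₀) (hNpos x).le (hmax x))
      (hf x₀ hx₀ x).deriv
  have hint : Integrable (fun x => kpoly c ω₁ γ (N x)) :=
    (integrable_KDens hv b ω₀ ω₁).congr (Filter.Eventually.of_forall hKpt)
  have hKI : ∫ x, kpoly c ω₁ γ (N x) = 0 := by
    rw [← hK, Kfun_eq hv]
    exact integral_congr_ae (Filter.Eventually.of_forall fun x => (hKpt x).symm)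
  have hsplit : (∫ x in Set.Iic x₀, kpoly c ω₁ γ (N x)) + (∫ x in x₀..x₁, kpoly c ω₁ γ (N x)) +
      (∫ x in Set.Ioi x₁, kpoly c ω₁ γ (N x)) = 0 := by
    rw [← intervalIntegral.integral_Iic_sub_Iic hint.integrableOn hint.integrableOn, ← hKI,
      ← intervalIntegral.integral_Iic_add_Ioi (b := x₁) hint.integrableOn hint.integrableOn]
    ring
  have hPhi := h.integral_kpoly_Phi
  rw [← intervalIntegral.integral_Iic_add_Ioi (b := 0) h.integrable_kpoly_Phi.integrableOn
    h.integrable_kpoly_Phi.integrableOn] at hPhi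
  have eL : ∫ x in Set.Iic x₀, kpoly c ω₁ γ (N x) =
      ∫ x in Set.Iic 0, kpoly c ω₁ γ (Phi c ω₁ A x) := by
    rw [← setIntegral_Iic_translate _ x₀]
    exact setIntegral_congr_fun measurableSet_Iic fun x hx => by simp only [hleft x hx]
  have eR : ∫ x in Set.Ioi x₁, kpoly c ω₁ γ (N x) =
      ∫ x in Set.Ioi 0, kpoly c ω₁ γ (Phi c ω₁ A x) := by
    rw [← setIntegral_Ioi_translate _ x₁]
    exact setIntegral_congr_fun measurableSet_Ioi fun x hx => by
      simp only [hright x (le_of_lt hx)]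
  have eM : ∫ x in x₀..x₁, kpoly c ω₁ γ (N x) = (x₁ - x₀) * kpoly c ω₁ γ s := by
    rw [intervalIntegral.integral_congr (g := fun _ => kpoly c ω₁ γ s), intervalIntegral.integral_const,
      smul_eq_mul]
    intro x hx
    rw [Set.uIcc_of_le h01] at hx
    simp only [hmid x hx.1 hx.2]
  have hzero : (x₁ - x₀) * kpoly c ω₁ γ s = 0 := by
    rw [eL, eR, eM] at hsplit
    linarith
  have hx01 : x₁ = x₀ := by
    rcases mul_eq_zero.1 hzero with h3 | h3
    · linarith
    · exact absurd h3 h.kpoly_sStar_neg.ne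
  refine ⟨x₀, ⟨fun x => ?_, hf x₀ hx₀⟩⟩
  rcases le_total x x₀ with hx | hx
  · exact hleft x hx
  · rw [← hx01] at hx ⊢
    exact hright x hx

/-- Two solutions with the same modulus differ by a constant phase. -/
lemma IsSol.eq_phase_mul {c ω₁ γ A : ℝ} (h : IsPar c ω₁ γ A) {v w : ℝ → ℂ} {x₀ : ℝ}
    (hv : IsSol c ω₁ γ A v x₀) (hw : IsSol c ω₁ γ A w x₀) :
    ∃ θ : ℝ, ∀ x, v x = Complex.exp (Complex.I * θ) * w x := by
  have hN : ∀ x, ‖v x‖ ^ 2 = ‖w x‖ ^ 2 := fun x => by rw [hv.normSq, hw.normSq]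
  have hw0 : ∀ x, w x ≠ 0 := by
    intro x hx
    have h1 := hw.normSq x
    have h2 := h.Phi_pos (x - x₀)
    rw [← h1, hx] at h2
    simp at h2
  have hder : ∀ x, HasDerivAt (fun y => v y / w y) 0 x := by
    intro x
    refine ((hv.hasDerivAt x).fun_div (hw.hasDerivAt x) (hw0 x)).congr_deriv ?_
    simp only [hN]
    rw [div_eq_zero_iff]
    left
    ring
  have hconst := fun x => is_const_of_deriv_eq_zero (fun t => (hder t).differentiableAt)
    (fun t => (hder t).deriv) x 0
  have hnorm : ‖v 0 / w 0‖ = 1 := by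
    have h1 : ‖v 0‖ = ‖w 0‖ := (pow_left_inj₀ (norm_nonneg _) (norm_nonneg _) two_ne_zero).1 (hN 0)
    rw [norm_div, h1, div_self (norm_ne_zero_iff.2 (hw0 0))]
  refine ⟨(v 0 / w 0).arg, fun x => ?_⟩
  have h3 : Complex.exp (Complex.I * (v 0 / w 0).arg) = v 0 / w 0 := by
    have := Complex.norm_mul_exp_arg_mul_I (v 0 / w 0)
    rw [hnorm, Complex.ofReal_one, one_mul, mul_comm] at this
    exact this
  rw [h3, ← hconst x, div_mul_cancel₀ _ (hw0 x)]

/-! ### Scaling and the lower bound -/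

lemma deriv_ofReal_mul (l : ℝ) (v : ℝ → ℂ) (x : ℝ) :
    deriv (fun x => (l : ℂ) * v x) x = (l : ℂ) * deriv v x :=
  deriv_const_mul_field _

lemma curr_scale (l : ℝ) (v : ℝ → ℂ) (x : ℝ) :
    curr (fun x => (l : ℂ) * v x) x = l ^ 2 * curr v x := by
  rw [curr, curr, deriv_ofReal_mul, map_mul, Complex.conj_ofReal,
    ← Complex.re_ofReal_mul]
  congr 1
  push_cast
  ring

lemma norm_sq_scale (l : ℝ) (z : ℂ) : ‖(l : ℂ) * z‖ ^ 2 = l ^ 2 * ‖z‖ ^ 2 := by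
  rw [norm_mul, mul_pow, Complex.norm_real, Real.norm_eq_abs, sq_abs]

lemma norm_six_scale (l : ℝ) (z : ℂ) : ‖(l : ℂ) * z‖ ^ 6 = l ^ 6 * ‖z‖ ^ 6 := by
  have : ∀ a : ℝ, a ^ 6 = (a ^ 2) ^ 3 := fun a => by ring
  rw [this, norm_sq_scale, this l, this ‖z‖, mul_pow]

lemma H1.scale {v : ℝ → ℂ} (hv : H1 v) (l : ℝ) : H1 (fun x => (l : ℂ) * v x) := by
  refine ⟨hv.1.const_mul _, ?_, ?_⟩
  · simp only [norm_sq_scale]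
    exact hv.2.1.const_mul _
  · simp only [deriv_ofReal_mul, norm_sq_scale]
    exact hv.2.2.const_mul _

lemma Sfun_scale {v : ℝ → ℂ} (hv : H1 v) (b ω₀ ω₁ l : ℝ) :
    Sfun b ω₀ ω₁ (fun x => (l : ℂ) * v x) = 1 / 2 * (l ^ 2 * Lfun ω₀ ω₁ v) -
      1 / 4 * (l ^ 4 * Pfun v) - b / 6 * (l ^ 6 * ∫ x, ‖v x‖ ^ 6) := by
  have hL : (∫ x, (l ^ 2 * ‖deriv v x‖ ^ 2 + ω₀ * (l ^ 2 * ‖v x‖ ^ 2) + ω₁ * (l ^ 2 * curr v x))) =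
      l ^ 2 * ∫ x, (‖deriv v x‖ ^ 2 + ω₀ * ‖v x‖ ^ 2 + ω₁ * curr v x) := by
    rw [← integral_const_mul]
    congr 1 with x
    ring
  have hP : (∫ x, l ^ 2 * ‖v x‖ ^ 2 * (l ^ 2 * curr v x)) =
      l ^ 4 * ∫ x, ‖v x‖ ^ 2 * curr v x := by
    rw [← integral_const_mul]
    congr 1 with x
    ring
  rw [Sfun, Lfun_eq (hv.scale l), Pfun_eq (hv.scale l), Lfun_eq hv, Pfun_eq hv]
  simp only [deriv_ofReal_mul, norm_sq_scale, norm_six_scale, curr_scale]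
  rw [hL, hP, integral_const_mul]

/-- `L_ω` is coercive on `Ω`, since `|Re (i v' v̄)| ≤ |v'| |v|`. -/
lemma Lfun_pos {ω₀ ω₁ : ℝ} (hΩ : ω₁ ^ 2 < 4 * ω₀) {v : ℝ → ℂ} (hv : H1 v) (hne : v ≠ 0) :
    0 < Lfun ω₀ ω₁ v := by
  have hc : 0 < ω₀ - ω₁ ^ 2 / 4 := by linarith
  have hpt : ∀ x, (ω₀ - ω₁ ^ 2 / 4) * ‖v x‖ ^ 2 ≤
      ‖deriv v x‖ ^ 2 + ω₀ * ‖v x‖ ^ 2 + ω₁ * curr v x := by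
    intro x
    rw [Complex.sq_norm, Complex.sq_norm, Complex.normSq_apply, Complex.normSq_apply, curr]
    simp only [Complex.mul_re, Complex.mul_im, Complex.I_re, Complex.I_im,
      Complex.conj_re, Complex.conj_im]
    nlinarith [sq_nonneg ((deriv v x).re + ω₁ / 2 * (v x).im),
      sq_nonneg ((deriv v x).im - ω₁ / 2 * (v x).re)]
  obtain ⟨x₀, hx₀, -⟩ := hv.exists_max hne
  have hpos : 0 < ∫ x, ‖v x‖ ^ 2 :=
    integral_pos_of_integrable_nonneg_nonzero hv.continuous_normSq hv.2.1
      (fun x => sq_nonneg _) hx₀.ne'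
  have h1 := integral_mono (hv.2.1.const_mul _) (integrable_LDens hv ω₀ ω₁) hpt
  rw [integral_const_mul, ← Lfun_eq hv] at h1
  exact (mul_pos hc hpos).trans_le h1

/-- The value `½ G(sStar)` bounds `S_ω` from below on the Nehari manifold, and it is attained only
by functions with `max |v|² = sStar`. With `t = sStar / max |v|²` and `l = √t`, the identity
`S(v) - S(l v) = (1 - t)² (L/4 + M/12 + M t/6)`, where `M = b ∫ |v|⁶`, reduces the bound to functions
whose squared modulus has maximum `sStar`. -/
lemma level_le {b ω₀ ω₁ A : ℝ} (hb : 0 < b) (hΩ : ω₁ ^ 2 < 4 * ω₀)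
    (h : IsPar (4 * ω₀ - ω₁ ^ 2) ω₁ (gam b) A) {v : ℝ → ℂ} (hv : H1 v) (hne : v ≠ 0)
    (hK : Kfun b ω₀ ω₁ v = 0) :
    1 / 2 * Gprim (4 * ω₀ - ω₁ ^ 2) ω₁ (gam b) (sStar (4 * ω₀ - ω₁ ^ 2) ω₁ A) ≤ Sfun b ω₀ ω₁ v ∧
    (Sfun b ω₀ ω₁ v =
      1 / 2 * Gprim (4 * ω₀ - ω₁ ^ 2) ω₁ (gam b) (sStar (4 * ω₀ - ω₁ ^ 2) ω₁ A) →
      (∃ x₀, ‖v x₀‖ ^ 2 = sStar (4 * ω₀ - ω₁ ^ 2) ω₁ A) ∧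
        ∀ x, ‖v x‖ ^ 2 ≤ sStar (4 * ω₀ - ω₁ ^ 2) ω₁ A) := by
  set s := sStar (4 * ω₀ - ω₁ ^ 2) ω₁ A with hs
  have hspos : 0 < s := h.sStar_pos
  obtain ⟨x₀, hx₀, hmax⟩ := hv.exists_max hne
  set m := ‖v x₀‖ ^ 2 with hm
  set t := s / m with ht
  have htpos : 0 < t := div_pos hspos hx₀
  have htm : t * m = s := div_mul_cancel₀ _ hx₀.ne'
  set l := Real.sqrt t with hl
  have hl2 : l ^ 2 = t := Real.sq_sqrt htpos.le
  have hw0 : ‖(l : ℂ) * v x₀‖ ^ 2 = s := by rw [norm_sq_scale, hl2, ← hm, htm]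
  have hwmax : ∀ x, ‖(l : ℂ) * v x‖ ^ 2 ≤ s := fun x => by
    rw [norm_sq_scale, hl2, ← htm]
    exact mul_le_mul_of_nonneg_left (hmax x) htpos.le
  obtain ⟨-, hS⟩ := Sfun_eq_defect h (hv.scale l) hw0 hwmax
  have hD : 0 ≤ ∫ x, ‖defect (4 * ω₀ - ω₁ ^ 2) ω₁ (gam b) (fun x => (l : ℂ) * v x) x₀ x‖ ^ 2 :=
    integral_nonneg fun x => sq_nonneg _
  rw [Sfun_scale hv] at hS
  have hL := Lfun_pos hΩ hv hne
  have hM : 0 ≤ b * ∫ x, ‖v x‖ ^ 6 :=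
    mul_nonneg hb.le (integral_nonneg fun x => by positivity)
  have hMt := mul_nonneg hM htpos.le
  have hdiff : Sfun b ω₀ ω₁ v - (1 / 2 * (l ^ 2 * Lfun ω₀ ω₁ v) -
      1 / 4 * (l ^ 4 * Pfun v) - b / 6 * (l ^ 6 * ∫ x, ‖v x‖ ^ 6)) =
      (1 - t) ^ 2 * (Lfun ω₀ ω₁ v / 4 + b * (∫ x, ‖v x‖ ^ 6) / 12 +
        b * (∫ x, ‖v x‖ ^ 6) * t / 6) := by
    rw [Kfun] at hK
    have hP : Pfun v = Lfun ω₀ ω₁ v - b * ∫ x, ‖v x‖ ^ 6 := by linarith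
    have h4 : l ^ 4 = t ^ 2 := by rw [← hl2]; ring
    have h6 : l ^ 6 = t ^ 3 := by rw [← hl2]; ring
    rw [Sfun, hP, hl2, h4, h6]
    ring
  have hfac : 0 < Lfun ω₀ ω₁ v / 4 + b * (∫ x, ‖v x‖ ^ 6) / 12 +
      b * (∫ x, ‖v x‖ ^ 6) * t / 6 := by linarith
  have hnn := mul_nonneg (sq_nonneg (1 - t)) hfac.le
  refine ⟨by linarith, fun he => ?_⟩
  have hz : (1 - t) ^ 2 * (Lfun ω₀ ω₁ v / 4 + b * (∫ x, ‖v x‖ ^ 6) / 12 +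
      b * (∫ x, ‖v x‖ ^ 6) * t / 6) = 0 := by linarith
  have ht1 : t = 1 := by
    have := (pow_eq_zero_iff two_ne_zero).1 ((mul_eq_zero.1 hz).resolve_right hfac.ne')
    linarith
  rw [ht1, one_mul] at htm
  rw [← htm]
  exact ⟨⟨x₀, rfl⟩, hmax⟩

/-- A function on the Nehari manifold at the level `½ G(sStar)` has vanishing defect, so it lies in
the orbit of `φ_ω`. -/
lemma mem_orbit_of_level {b ω₀ ω₁ : ℝ} (hb : 0 < b) (hΩ : ω₁ ^ 2 < 4 * ω₀) {A : ℝ}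
    (h : IsPar (4 * ω₀ - ω₁ ^ 2) ω₁ (gam b) A)
    (horb : ∀ θ₁ : ℝ, IsSol (4 * ω₀ - ω₁ ^ 2) ω₁ (gam b) A
      (fun x => phi b ω₀ ω₁ (x - θ₁)) θ₁)
    {v : ℝ → ℂ} (hv : H1 v) (hne : v ≠ 0) (hK : Kfun b ω₀ ω₁ v = 0)
    (hS : Sfun b ω₀ ω₁ v =
      1 / 2 * Gprim (4 * ω₀ - ω₁ ^ 2) ω₁ (gam b) (sStar (4 * ω₀ - ω₁ ^ 2) ω₁ A)) :
    ∃ θ₀ θ₁ : ℝ, v = fun x => Complex.exp (Complex.I * θ₀) * phi b ω₀ ω₁ (x - θ₁) := by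
  obtain ⟨hex, hmax⟩ := (level_le hb hΩ h hv hne hK).2 hS
  obtain ⟨x₀, hsol⟩ := exists_isSol h hv hK hex hmax fun x₀ hx₀ => by
    obtain ⟨hi, hS'⟩ := Sfun_eq_defect h hv hx₀ hmax
    have h0 : ∫ x, ‖defect (4 * ω₀ - ω₁ ^ 2) ω₁ (gam b) v x₀ x‖ ^ 2 = 0 := by linarith
    rw [integral_eq_zero_iff_of_nonneg (fun x => sq_nonneg _) hi] at h0
    refine firstOrder_of_defect h hv hx₀ ?_
    filter_upwards [h0] with x hx
    simpa using hx
  obtain ⟨θ, hθ⟩ := hsol.eq_phase_mul h (horb x₀)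
  exact ⟨θ, x₀, funext hθ⟩

theorem stmt15 (b : ℝ) (hb : 0 < b) (ω₀ ω₁ : ℝ) (hΩ : ω₁ ^ 2 < 4 * ω₀) :
    {v : ℝ → ℂ | H1 v ∧ v ≠ 0 ∧ Kfun b ω₀ ω₁ v = 0 ∧
        Sfun b ω₀ ω₁ v =
          sInf {s : ℝ | ∃ w : ℝ → ℂ, H1 w ∧ w ≠ 0 ∧ Kfun b ω₀ ω₁ w = 0 ∧ s = Sfun b ω₀ ω₁ w}} =
      {v : ℝ → ℂ |
        ∃ θ₀ θ₁ : ℝ, v = fun x => Complex.exp (Complex.I * θ₀) * phi b ω₀ ω₁ (x - θ₁)} := by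
  have h := isPar hb hΩ
  have horb := fun θ₀ θ₁ : ℝ => isSol_orbit hb hΩ θ₀ θ₁
  set A := Real.sqrt (ω₁ ^ 2 + gam b * (4 * ω₀ - ω₁ ^ 2))
  have hinf : sInf {s : ℝ | ∃ w : ℝ → ℂ, H1 w ∧ w ≠ 0 ∧ Kfun b ω₀ ω₁ w = 0 ∧
      s = Sfun b ω₀ ω₁ w} =
      1 / 2 * Gprim (4 * ω₀ - ω₁ ^ 2) ω₁ (gam b) (sStar (4 * ω₀ - ω₁ ^ 2) ω₁ A) := by
    refine IsLeast.csInf_eq ⟨⟨_, (horb 0 0).h1 h, (horb 0 0).ne_zero h,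
      (horb 0 0).Kfun_eq_zero h, ((horb 0 0).Sfun_eq_level h).symm⟩, ?_⟩
    rintro s ⟨w, hw, hne, hK, rfl⟩
    exact (level_le hb hΩ h hw hne hK).1
  rw [hinf]
  ext v
  constructor
  · rintro ⟨hv, hne, hK, hS⟩
    refine mem_orbit_of_level hb hΩ h (fun θ₁ => ?_) hv hne hK hS
    simpa using horb 0 θ₁
  · rintro ⟨θ₀, θ₁, rfl⟩
    exact ⟨(horb θ₀ θ₁).h1 h, (horb θ₀ θ₁).ne_zero h, (horb θ₀ θ₁).Kfun_eq_zero h,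
      (horb θ₀ θ₁).Sfun_eq_level h⟩

end
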